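/- arXiv:1911.07008 — 4 statements merged into one kernel-verified Lean document; each statement's English description precedes it below -/
import Mathlib

section
/- Let n ≥ 1 and let f₂ and f₃ be complex homogeneous polynomials of degrees 2 and 3 in the variables x₁,…,x_{n+1}, with f₂ a nondegenerate quadratic form, and set F = x₀·f₂ + f₃. Then the cubic hypersurface X₀ = {F = 0} ⊂ P^{n+1} has no singular points other than p = [1:0:⋯:0] if and only if the intersection Q ∩ C is transversal, i.e., at every common zero v ∈ ℂ^{n+1}, v ≠ 0, of f₂ and f₃, the gradients ∇f₂(v) and ∇f₃(v) are linearly independent over ℂ. -/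
/-!
Write a nonzero point of `ℂ^{n+2}` as `z = (t, v)`. Then `F(z) = t f₂(v) + f₃(v)`,
`∂₀F(z) = f₂(v)` and
`∂_{i+1}F(z) = t ∂ᵢf₂(v) + ∂ᵢf₃(v)`. Hence `z` is a singular point of `X₀` exactly when `v` is a
common zero of `f₂` and `f₃` with `t ∇f₂(v) + ∇f₃(v) = 0`, and `z` represents the node exactly
when `v = 0`. For `v ≠ 0` nondegeneracy gives `∇f₂(v) ≠ 0`, so a linear dependence between the
two gradients can be normalised to the form `t ∇f₂(v) + ∇f₃(v) = 0`.
-/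

open MvPolynomial

/-- The cubic form `F = x₀ · f₂(x₁,…,x_{n+1}) + f₃(x₁,…,x_{n+1})` in the variables
`x₀, …, x_{n+1}`, where `f₂` and `f₃` are polynomials in the variables `x₁, …, x_{n+1}`
(renamed into the last `n+1` of the `n+2` variables via `Fin.succ`). -/
noncomputable def nodalCubicForm {K : Type} [CommRing K] {n : ℕ}
    (f₂ f₃ : MvPolynomial (Fin (n + 1)) K) : MvPolynomial (Fin (n + 2)) K :=
  X 0 * rename Fin.succ f₂ + rename Fin.succ f₃

lemma eval_nodalCubicForm {n : ℕ} (f₂ f₃ : MvPolynomial (Fin (n + 1)) ℂ)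
    (z : Fin (n + 2) → ℂ) :
    eval z (nodalCubicForm f₂ f₃) = z 0 * eval (Fin.tail z) f₂ + eval (Fin.tail z) f₃ := by
  simp only [nodalCubicForm, map_add, map_mul, eval_X, eval_rename]
  rfl

lemma pderiv_zero_rename_succ {n : ℕ} (f : MvPolynomial (Fin (n + 1)) ℂ) :
    pderiv 0 (rename Fin.succ f) = 0 := by
  classical
  apply pderiv_eq_zero_of_notMem_vars
  intro h
  obtain ⟨i, -, hi⟩ := Finset.mem_image.mp (vars_rename Fin.succ f h)
  exact Fin.succ_ne_zero i hi

lemma eval_pderiv_zero_nodalCubicForm {n : ℕ} (f₂ f₃ : MvPolynomial (Fin (n + 1)) ℂ)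
    (z : Fin (n + 2) → ℂ) :
    eval z (pderiv 0 (nodalCubicForm f₂ f₃)) = eval (Fin.tail z) f₂ := by
  simp only [nodalCubicForm, map_add, Derivation.leibniz, pderiv_zero_rename_succ, pderiv_X_self,
    mul_zero, zero_add, add_zero, smul_eq_mul, mul_one, eval_rename]
  rfl

lemma eval_pderiv_succ_nodalCubicForm {n : ℕ} (f₂ f₃ : MvPolynomial (Fin (n + 1)) ℂ)
    (z : Fin (n + 2) → ℂ) (i : Fin (n + 1)) :
    eval z (pderiv i.succ (nodalCubicForm f₂ f₃)) =
      z 0 * eval (Fin.tail z) (pderiv i f₂) + eval (Fin.tail z) (pderiv i f₃) := by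
  simp only [nodalCubicForm, map_add, Derivation.leibniz,
    pderiv_rename (Fin.succ_injective (n + 1)), pderiv_X_of_ne (Fin.succ_ne_zero i).symm,
    mul_zero, add_zero, smul_eq_mul, map_mul, eval_X, eval_rename]
  rfl

/-- Lemma 1 (Finashin–Kharlamov): for a cubic `X₀ = {x₀·f₂ + f₃ = 0} ⊂ P^{n+1}` with a
node at `p = [1:0:⋯:0]` (`f₂` a nondegenerate complex quadratic form, expressed by the
nonvanishing of its gradient at nonzero points), `X₀` has no singular points other than
`p` if and only if the intersection `Q ∩ C = {f₂ = f₃ = 0}` is transversal, i.e. at each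
nonzero common zero `v` the gradients `∇f₂(v)` and `∇f₃(v)` are linearly independent. -/
theorem nodal_cubic_smooth_iff_transversal (n : ℕ) (hn : 1 ≤ n)
    (f₂ f₃ : MvPolynomial (Fin (n + 1)) ℂ)
    (hf₂ : f₂.IsHomogeneous 2) (hf₃ : f₃.IsHomogeneous 3)
    (hnd : ∀ v : Fin (n + 1) → ℂ, v ≠ 0 → ∃ i, eval v (pderiv i f₂) ≠ 0) :
    (∀ z : Fin (n + 2) → ℂ, z ≠ 0 → eval z (nodalCubicForm f₂ f₃) = 0 →
        (∀ i, eval z (pderiv i (nodalCubicForm f₂ f₃)) = 0) →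
        ∃ c : ℂ, z = c • (Pi.single 0 1 : Fin (n + 2) → ℂ)) ↔
      (∀ v : Fin (n + 1) → ℂ, v ≠ 0 → eval v f₂ = 0 → eval v f₃ = 0 →
        LinearIndependent ℂ
          ![fun i => eval v (pderiv i f₂), fun i => eval v (pderiv i f₃)]) := by
  have hgrad : ∀ v : Fin (n + 1) → ℂ, v ≠ 0 → (fun i => eval v (pderiv i f₂)) ≠ 0 := by
    intro v hv h
    obtain ⟨i, hi⟩ := hnd v hv
    exact hi (congrFun h i)
  constructor
  · intro hsing v hv h₂ h₃
    rw [LinearIndependent.pair_iff' (hgrad v hv)]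
    intro a ha
    -- If `∇f₃(v) = a ∇f₂(v)`, then `(-a, v)` is a singular point other than the node.
    obtain ⟨c, hc⟩ := hsing (Fin.cons (-a) v)
      (fun h => hv (funext fun i => by simpa using congrFun h i.succ))
      (by simp [eval_nodalCubicForm, h₂, h₃])
      (by
        intro i
        refine Fin.cases ?_ (fun j => ?_) i
        · simpa [eval_pderiv_zero_nodalCubicForm] using h₂
        · have hj := congrFun ha j
          simp only [Pi.smul_apply, smul_eq_mul] at hj
          rw [eval_pderiv_succ_nodalCubicForm, Fin.cons_zero, Fin.tail_cons, ← hj]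
          ring)
    exact hv (funext fun i => by simpa using congrFun hc i.succ)
  · intro htrans z _ hF hdF
    have h₂ : eval (Fin.tail z) f₂ = 0 := by
      rw [← eval_pderiv_zero_nodalCubicForm f₂ f₃]
      exact hdF 0
    have h₃ : eval (Fin.tail z) f₃ = 0 := by
      simpa [eval_nodalCubicForm, h₂] using hF
    have hv : Fin.tail z = 0 := by
      by_contra hv
      have hli := htrans _ hv h₂ h₃
      rw [LinearIndependent.pair_iff' (hgrad _ hv)] at hli
      refine hli (-z 0) (funext fun i => ?_)
      have hi := hdF i.succ
      rw [eval_pderiv_succ_nodalCubicForm] at hi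
      simp only [Pi.smul_apply, smul_eq_mul]
      linear_combination -hi
    refine ⟨z 0, funext fun i => ?_⟩
    refine Fin.cases ?_ (fun j => ?_) i
    · simp
    · simpa [Fin.tail] using congrFun hv j
end

section
/- Let m ≥ 0 and define real homogeneous polynomials in x₀,…,x_{4+m}: f₂(x) = Σ_{i=1}^{4+m} x_i² − x₀² and f₄(x) = (Σ_{i=1}^{4+m} x_i² − 2x₀²)·(Σ_{i=1}^{4+m} x_i² + x₀²). Then the only real common zero of f₂ and f₄ is x = 0. Consequently, for every ε ≠ 0, the real quartic hypersurface X₀ = {y²·f₂(x) + ε·f₄(x) = 0} ⊂ P^{5+m} (with homogeneous coordinates x₀,…,x_{4+m}, y) contains no real line passing through its node p = [0:⋯:0:1]: there is no 2-dimensional real subspace W ⊆ ℝ^{6+m} containing the vector (0,…,0,1) on which the quartic form y²·f₂(x) + ε·f₄(x) vanishes identically. -/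
/-!
If `f₂(x) = 0` then `Σ_{i≥1} xᵢ² = x₀²`, so `f₄(x) = -2 x₀⁴`; hence a common zero has `x₀ = 0`,
then `Σ_{i≥1} xᵢ² = 0`, and so `x = 0` (`eq_zero_of_quarticF2_of_quarticF4`).

If `W` contains `(0, 1)`, then with `(x, y)` it contains both `(x, 0)` and `(x, 1)`. Vanishing of
`y² f₂ + ε f₄` at these two points gives `f₄(x) = 0` and `f₂(x) = 0`, so `x = 0`. Thus `W` is
contained in the line spanned by `(0, 1)` and cannot have dimension two.
-/

/-- The quadratic form `f₂(x) = Σ_{i=1}^{4+m} xᵢ² − x₀²` on `ℝ^{5+m}`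
(coordinates `x₀, …, x_{4+m}`). -/
def quarticF2 (m : ℕ) (x : Fin (m + 5) → ℝ) : ℝ :=
  (∑ i : Fin (m + 4), x i.succ ^ 2) - x 0 ^ 2

/-- The quartic form `f₄(x) = (Σ xᵢ² − 2x₀²)·(Σ xᵢ² + x₀²)` on `ℝ^{5+m}`. -/
def quarticF4 (m : ℕ) (x : Fin (m + 5) → ℝ) : ℝ :=
  ((∑ i : Fin (m + 4), x i.succ ^ 2) - 2 * x 0 ^ 2) *
    ((∑ i : Fin (m + 4), x i.succ ^ 2) + x 0 ^ 2)

theorem eq_zero_of_quarticF2_of_quarticF4 (m : ℕ) (x : Fin (m + 5) → ℝ)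
    (h2 : quarticF2 m x = 0) (h4 : quarticF4 m x = 0) : x = 0 := by
  unfold quarticF2 at h2
  unfold quarticF4 at h4
  have hs : ∑ i : Fin (m + 4), x i.succ ^ 2 = x 0 ^ 2 := by linarith
  rw [hs] at h4
  have h0 : x 0 = 0 := by
    have h : x 0 ^ 4 = 0 := by linarith
    exact pow_eq_zero_iff (by norm_num) |>.mp h
  rw [h0, zero_pow two_ne_zero, Finset.sum_eq_zero_iff_of_nonneg (fun i _ => sq_nonneg _)] at hs
  funext i
  refine Fin.cases h0 (fun j => ?_) i
  exact pow_eq_zero_iff two_ne_zero |>.mp (hs j (Finset.mem_univ j))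

/-- (Finashin–Kharlamov, concluding remarks, quartic example.)  The only real common
zero of `f₂` and `f₄` is `x = 0`; consequently, for every `ε ≠ 0` the real quartic
hypersurface `{y²·f₂(x) + ε·f₄(x) = 0} ⊂ P^{5+m}` contains no real line through its
node `p = [0:⋯:0:1]`: no 2-dimensional subspace `W ⊆ ℝ^{6+m}` containing `(0,…,0,1)`
has the quartic form vanishing identically on it.  Points of `ℝ^{6+m}` are written
`(x, y)` with `x ∈ ℝ^{5+m}` and `y ∈ ℝ`, and `p` corresponds to the vector `(0, 1)`. -/
theorem quartic_no_real_lines_through_node (m : ℕ) :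
    (∀ x : Fin (m + 5) → ℝ, quarticF2 m x = 0 → quarticF4 m x = 0 → x = 0) ∧
    ∀ ε : ℝ, ε ≠ 0 →
      ¬ ∃ W : Submodule ℝ ((Fin (m + 5) → ℝ) × ℝ), Module.finrank ℝ W = 2 ∧
          ((0, 1) : (Fin (m + 5) → ℝ) × ℝ) ∈ W ∧
          ∀ w ∈ W, w.2 ^ 2 * quarticF2 m w.1 + ε * quarticF4 m w.1 = 0 := by
  refine ⟨eq_zero_of_quarticF2_of_quarticF4 m, ?_⟩
  rintro ε hε ⟨W, hdim, hp, hW⟩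
  have hx : ∀ w ∈ W, w.1 = 0 := by
    intro w hw
    have hmem : ∀ t : ℝ, (w.1, t) ∈ W := by
      intro t
      have h := W.add_mem hw (W.smul_mem (t - w.2) hp)
      have he : w + (t - w.2) • ((0, 1) : (Fin (m + 5) → ℝ) × ℝ) = (w.1, t) := by
        ext <;> simp
      rwa [he] at h
    have h0 := hW _ (hmem 0)
    have h1 := hW _ (hmem 1)
    have h4 : quarticF4 m w.1 = 0 := by simpa [hε] using h0
    have h2 : quarticF2 m w.1 = 0 := by simpa [h4] using h1
    exact eq_zero_of_quarticF2_of_quarticF4 m w.1 h2 h4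
  have hle : W ≤ Submodule.span ℝ {((0, 1) : (Fin (m + 5) → ℝ) × ℝ)} := by
    intro w hw
    rw [Submodule.mem_span_singleton]
    exact ⟨w.2, Prod.ext (by simp [hx w hw]) (by simp)⟩
  have h1 := Submodule.finrank_mono hle
  rw [hdim, finrank_span_singleton (by simp)] at h1
  omega
end

section
/- Let m ≥ 0 and ε₁ ≠ 0 be real, and consider on ℝ^{4+m} × ℝ² the real forms q(y,u,v) = Σ_{i=0}^{3+m} y_i² − u² − v² (quadratic) and c(y,u,v) = y₀³ + ε₁(u³ + v³) (cubic). Then there is no 2-dimensional real linear subspace W ⊆ ℝ^{4+m} × ℝ² on which both q and c vanish identically; that is, the quadro-cubic {q = 0, c = 0} ⊂ P^{5+m} contains no real lines at all. -/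
/-!
On a subspace `W` where `q` vanishes, `(u, v) = 0` forces `Σ yᵢ² = 0`, so the projection of `W`
to the `(u, v)`-plane is injective; if `dim W = 2` it is bijective. Hence `y₀ = a u + b v` on `W`,
and the vanishing of `c` would make `-ε₁ (u³ + v³)` the cube of a real linear form. Evaluating at
`(1, 0)`, `(1, 1)` and `(1, -1)` shows that this is impossible for `ε₁ ≠ 0`.
-/

/-- The quadratic form `q(y,u,v) = Σ_{i=0}^{3+m} yᵢ² − u² − v²` on `ℝ^{4+m} × ℝ²`,
whose points are written `z = (y, (u, v))`. -/
def hyperbolicQ (m : ℕ) (z : (Fin (m + 4) → ℝ) × ℝ × ℝ) : ℝ :=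
  (∑ i : Fin (m + 4), z.1 i ^ 2) - z.2.1 ^ 2 - z.2.2 ^ 2

/-- The cubic form `c(y,u,v) = y₀³ + ε₁(u³ + v³)` on `ℝ^{4+m} × ℝ²`. -/
def quadroCubicC (m : ℕ) (ε₁ : ℝ) (z : (Fin (m + 4) → ℝ) × ℝ × ℝ) : ℝ :=
  z.1 0 ^ 3 + ε₁ * (z.2.1 ^ 3 + z.2.2 ^ 3)

/-- (Finashin–Kharlamov, concluding remarks.)  For any real `ε₁ ≠ 0` the quadro-cubic
`{q = 0, c = 0} ⊂ P^{5+m}`, with `q(y,u,v) = Σ yᵢ² − u² − v²` and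
`c(y,u,v) = y₀³ + ε₁(u³+v³)`, contains no real lines at all: there is no 2-dimensional
subspace `W ⊆ ℝ^{4+m} × ℝ²` on which both `q` and `c` vanish identically. -/
theorem quadroCubic_no_real_lines (m : ℕ) (ε₁ : ℝ) (hε₁ : ε₁ ≠ 0) :
    ¬ ∃ W : Submodule ℝ ((Fin (m + 4) → ℝ) × ℝ × ℝ), Module.finrank ℝ W = 2 ∧
        (∀ z ∈ W, hyperbolicQ m z = 0) ∧ (∀ z ∈ W, quadroCubicC m ε₁ z = 0) := by
  rintro ⟨W, hdim, hq, hc⟩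
  have hinj : Function.Injective
      ((LinearMap.snd ℝ (Fin (m + 4) → ℝ) (ℝ × ℝ)).comp W.subtype) := by
    rw [← LinearMap.ker_eq_bot, LinearMap.ker_eq_bot']
    rintro ⟨⟨y, u, v⟩, hz⟩ h
    have h0 : u = 0 ∧ v = 0 := by simpa using h
    obtain ⟨rfl, rfl⟩ := h0
    have hs : ∑ i, y i ^ 2 = 0 := by simpa [hyperbolicQ] using hq _ hz
    have hy : y = 0 := by
      funext i
      have := (Finset.sum_eq_zero_iff_of_nonneg (fun i _ => sq_nonneg (y i))).1 hs i
        (Finset.mem_univ i)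
      simpa using this
    subst hy
    rfl
  have : Module.Finite ℝ W := Module.finite_of_finrank_eq_succ hdim
  have hsurj := (LinearMap.injective_iff_surjective_of_finrank_eq_finrank
    (by simp [hdim])).1 hinj
  obtain ⟨⟨⟨y, u, v⟩, hp⟩, h1⟩ := hsurj (1, 0)
  obtain ⟨⟨⟨y', u', v'⟩, hr⟩, h2⟩ := hsurj (0, 1)
  have h1' : u = 1 ∧ v = 0 := by simpa using h1
  have h2' : u' = 0 ∧ v' = 1 := by simpa using h2
  obtain ⟨rfl, rfl⟩ := h1'
  obtain ⟨rfl, rfl⟩ := h2'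
  have e1 := hc _ hp
  have e3 := hc _ (W.add_mem hp hr)
  have e4 := hc _ (W.sub_mem hp hr)
  simp only [quadroCubicC, Prod.mk_add_mk, Prod.mk_sub_mk, Pi.add_apply, Pi.sub_apply]
    at e1 e3 e4
  have hab : y 0 - y' 0 = 0 := by
    have : (y 0 - y' 0) ^ 3 = 0 := by linarith
    exact pow_eq_zero_iff (by norm_num) |>.1 this
  have hb : y' 0 = y 0 := by linarith
  rw [hb] at e3
  -- With `a = b`: `a³ = -ε₁` and `8 a³ = -2 ε₁`.
  apply hε₁
  linarith
end

section
/- Let m ≥ 0 and let ε₁ ≠ 0, ε₂ ≠ 0 be real. Consider the real cubic hypersurface X₀ ⊂ P^{6+m} of dimension 5 + m defined in homogeneous coordinates (y₀,…,y_{3+m}, u, v, w) by w·(Σ_{i=0}^{3+m} y_i² − u² − v²) − ε₂·(y₀³ + ε₁(u³ + v³)) = 0, which has a node at the point p = [0:⋯:0:0:0:1]. Then X₀ contains no real 2-plane passing through p: there is no 3-dimensional real linear subspace of ℝ^{7+m} containing the vector (0,…,0,0,0,1) on which the above cubic form vanishes identically. -/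
/-!
Write `q = Σ yᵢ² − u² − v²` and `c = y₀³ + ε₁(u³ + v³)`. If `V` contains `(0,0,0,1)`, then `w` may
be shifted freely inside `V`, so `q` and `c` both vanish on `V` (`quadric_cubic_vanish`). A vector of
`V` with `u = v = 0` has `Σ yᵢ² = 0`, hence `y = 0`; so the projection `V → ℝ³`, `z ↦ (u, v, w)`, is
injective, and by dimension it is bijective. Take `z₁, z₂ ∈ V` over `(1,0,0)` and `(0,1,0)`, with
`y₀`-coordinates `a` and `b`. Vanishing of `c` at `z₁`, `z₂` and `z₁ + z₂` gives
`a³ = b³ = −ε₁` and `(a + b)³ = −2ε₁`. Over the reals `a = b`, so `8a³ = 2a³` and `ε₁ = 0`.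
-/

/-- The cubic form `G(y,u,v,w) = w·(Σ_{i=0}^{3+m} yᵢ² − u² − v²) − ε₂·(y₀³ + ε₁(u³+v³))`
on `ℝ^{7+m} = ℝ^{4+m} × ℝ × ℝ × ℝ`, whose points are written `z = (y, (u, (v, w)))`. -/
def nodalCubicG (m : ℕ) (ε₁ ε₂ : ℝ) (z : (Fin (m + 4) → ℝ) × ℝ × ℝ × ℝ) : ℝ :=
  z.2.2.2 * ((∑ i : Fin (m + 4), z.1 i ^ 2) - z.2.1 ^ 2 - z.2.2.1 ^ 2) -
    ε₂ * (z.1 0 ^ 3 + ε₁ * (z.2.1 ^ 3 + z.2.2.1 ^ 3))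

/-- `G` is affine-linear in `w` with coefficients `q` and `−ε₂ c`, and `V` is stable under
translation in `w`, so both coefficients vanish on `V`. -/
theorem quadric_cubic_vanish {m : ℕ} {ε₁ ε₂ : ℝ} (hε₂ : ε₂ ≠ 0)
    {V : Submodule ℝ ((Fin (m + 4) → ℝ) × ℝ × ℝ × ℝ)}
    (hp : ((0, 0, 0, 1) : (Fin (m + 4) → ℝ) × ℝ × ℝ × ℝ) ∈ V)
    (hV : ∀ z ∈ V, nodalCubicG m ε₁ ε₂ z = 0)
    {z : (Fin (m + 4) → ℝ) × ℝ × ℝ × ℝ} (hz : z ∈ V) :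
    (∑ i : Fin (m + 4), z.1 i ^ 2) - z.2.1 ^ 2 - z.2.2.1 ^ 2 = 0 ∧
      z.1 0 ^ 3 + ε₁ * (z.2.1 ^ 3 + z.2.2.1 ^ 3) = 0 := by
  have h₀ := hV z hz
  have h₁ := hV _ (V.add_mem hz hp)
  simp only [nodalCubicG, Prod.fst_add, Prod.snd_add, add_zero] at h₀ h₁
  have hq : (∑ i : Fin (m + 4), z.1 i ^ 2) - z.2.1 ^ 2 - z.2.2.1 ^ 2 = 0 := by
    linear_combination h₁ - h₀
  refine ⟨hq, ?_⟩
  rw [hq, mul_zero, zero_sub, neg_eq_zero] at h₀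
  exact (mul_eq_zero.mp h₀).resolve_left hε₂

/-- (Finashin–Kharlamov, concluding remarks, cubic example.)  For real `ε₁ ≠ 0`,
`ε₂ ≠ 0`, the real cubic hypersurface of dimension `5+m` defined in `P^{6+m}` by
`w·(Σ yᵢ² − u² − v²) − ε₂·(y₀³ + ε₁(u³ + v³)) = 0`, which has a node at
`p = [0:⋯:0:1]`, contains no real 2-plane through `p`: there is no 3-dimensional
subspace `V ⊆ ℝ^{7+m}` containing the vector `(0,0,0,1)` on which the cubic form
vanishes identically. -/
theorem cubic_no_real_planes_through_node (m : ℕ) (ε₁ ε₂ : ℝ)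
    (hε₁ : ε₁ ≠ 0) (hε₂ : ε₂ ≠ 0) :
    ¬ ∃ V : Submodule ℝ ((Fin (m + 4) → ℝ) × ℝ × ℝ × ℝ), Module.finrank ℝ V = 3 ∧
        ((0, 0, 0, 1) : (Fin (m + 4) → ℝ) × ℝ × ℝ × ℝ) ∈ V ∧
        ∀ z ∈ V, nodalCubicG m ε₁ ε₂ z = 0 := by
  rintro ⟨V, hdim, hp, hV⟩
  have key := fun z hz => quadric_cubic_vanish (z := z) hε₂ hp hV hz
  let L : V →ₗ[ℝ] ℝ × ℝ × ℝ := (LinearMap.snd ℝ (Fin (m + 4) → ℝ) (ℝ × ℝ × ℝ)).comp V.subtype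
  have hinj : Function.Injective L := by
    rw [injective_iff_map_eq_zero]
    rintro ⟨⟨y, t⟩, hz⟩ h
    have ht : t = 0 := h
    subst ht
    have hq := (key _ hz).1
    simp only [Prod.fst_zero, Prod.snd_zero, ne_eq, OfNat.ofNat_ne_zero, not_false_eq_true,
      zero_pow, sub_zero] at hq
    rw [Finset.sum_eq_zero_iff_of_nonneg (fun i _ => sq_nonneg (y i))] at hq
    have hy : y = 0 := funext fun i => pow_eq_zero_iff two_ne_zero |>.mp (hq i (Finset.mem_univ i))
    subst hy
    rfl
  have hsurj : Function.Surjective L :=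
    (LinearMap.injective_iff_surjective_of_finrank_eq_finrank (by simp [hdim])).mp hinj
  obtain ⟨⟨⟨y₁, t₁⟩, hz₁⟩, h₁⟩ := hsurj (1, 0, 0)
  obtain ⟨⟨⟨y₂, t₂⟩, hz₂⟩, h₂⟩ := hsurj (0, 1, 0)
  have ht₁ : t₁ = (1, 0, 0) := h₁
  have ht₂ : t₂ = (0, 1, 0) := h₂
  subst ht₁ ht₂
  have c₁ := (key _ hz₁).2
  have c₂ := (key _ hz₂).2
  have c₃ := (key _ (V.add_mem hz₁ hz₂)).2
  simp only [Prod.mk_add_mk, Pi.add_apply] at c₁ c₂ c₃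
  -- Cubing is injective on `ℝ`; this is where reality of the plane is used for the cubic `c`.
  have hab : y₁ 0 = y₂ 0 :=
    (Odd.strictMono_pow (by decide : Odd 3)).injective (by linear_combination c₁ - c₂)
  rw [← hab] at c₃
  apply hε₁
  linear_combination (4 / 3) * c₁ - (1 / 6) * c₃
end
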